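/- arXiv:2012.01882 — 3 statements merged into one kernel-verified Lean document; each statement's English description precedes it below -/
import Mathlib

section
/- Let n ≥ 1, let ε > 0, and let P be a probability vector on [n] whose ℓ₁ distance from the uniform vector is at least ε, i.e. ∑_{i} |P i − 1/n| ≥ ε. Then the collision probability of P satisfies μ(P) = ∑_{i} (P i)² ≥ (1 + ε²)/n. -/
/-!
Let `m` be the mean of a vector `f` on a finite set of `n` points. By the Cauchy–Schwarz inequality,
the square of the ℓ₁ distance from `f` to the constant vector `m` is at most `n` times the square of
the ℓ₂ distance, and the variance identity gives the latter as `∑ i, f i ^ 2 - (∑ i, f i) ^ 2 / n`.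
-/

section Deviation

variable {ι K : Type*} [Field K]

theorem card_mul_sum_sub_mean_sq [CharZero K] (s : Finset ι) (f : ι → K) :
    s.card * ∑ i ∈ s, (f i - (∑ j ∈ s, f j) / s.card) ^ 2 =
      s.card * ∑ i ∈ s, f i ^ 2 - (∑ i ∈ s, f i) ^ 2 := by
  obtain rfl | hs := s.eq_empty_or_nonempty
  · simp
  have hcard : (s.card : K) ≠ 0 := Nat.cast_ne_zero.mpr hs.card_ne_zero
  simp only [sub_sq, Finset.sum_add_distrib, Finset.sum_sub_distrib, ← Finset.sum_mul,
    ← Finset.mul_sum, Finset.sum_const, nsmul_eq_mul]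
  field_simp
  ring

variable [LinearOrder K] [IsStrictOrderedRing K]

theorem sq_sum_add_sq_sum_abs_sub_mean_le_card_mul_sum_sq (s : Finset ι) (f : ι → K) :
    (∑ i ∈ s, f i) ^ 2 + (∑ i ∈ s, |f i - (∑ j ∈ s, f j) / s.card|) ^ 2 ≤
      s.card * ∑ i ∈ s, f i ^ 2 := by
  rw [← le_sub_iff_add_le', ← card_mul_sum_sub_mean_sq]
  simpa only [sq_abs] using
    sq_sum_le_card_mul_sum_sq (s := s) (f := fun i ↦ |f i - (∑ j ∈ s, f j) / s.card|)

theorem collision_prob_lower_bound_of_far_general {s : Finset ι} (hs : s.Nonempty) {f : ι → K}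
    {S ε : K} (hS : ∑ i ∈ s, f i = S) (hε : 0 ≤ ε) (hfar : ε ≤ ∑ i ∈ s, |f i - S / s.card|) :
    (S ^ 2 + ε ^ 2) / s.card ≤ ∑ i ∈ s, f i ^ 2 := by
  subst hS
  rw [div_le_iff₀' (Nat.cast_pos.mpr hs.card_pos)]
  calc (∑ i ∈ s, f i) ^ 2 + ε ^ 2
      ≤ (∑ i ∈ s, f i) ^ 2 + (∑ i ∈ s, |f i - (∑ j ∈ s, f j) / s.card|) ^ 2 := by gcongr
    _ ≤ s.card * ∑ i ∈ s, f i ^ 2 := sq_sum_add_sq_sum_abs_sub_mean_le_card_mul_sum_sq s f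

end Deviation

/-- If a probability vector `P` on `[n]` is ε-far in ℓ₁ from the uniform vector, then its
collision probability `μ(P) = ∑ i, (P i)²` is at least `(1 + ε²)/n`. -/
theorem collision_prob_lower_bound_of_far (n : ℕ) (hn : 1 ≤ n) (ε : ℝ) (hε : 0 < ε)
    (P : Fin n → ℝ) (hP0 : ∀ i, 0 ≤ P i) (hP1 : (∑ i, P i) = 1)
    (hfar : ε ≤ ∑ i, |P i - 1 / (n : ℝ)|) :
    (1 + ε ^ 2) / (n : ℝ) ≤ ∑ i, (P i) ^ 2 := by
  have huniv : (Finset.univ : Finset (Fin n)).Nonempty := ⟨⟨0, hn⟩, Finset.mem_univ _⟩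
  simpa using collision_prob_lower_bound_of_far_general huniv hP1 hε.le (by simpa using hfar)
end

section
/- Let n ≥ 1 and let P be a probability vector on [n]. Define a : Fin n → ℝ by a i = P i − 1/n. Then γ(P) − μ(P)² = (1/n)·∑_i (a i)² + ∑_i (a i)³ − (∑_i (a i)²)², and consequently γ(P) − μ(P)² ≤ (1/n)·∑_i (a i)² + (∑_i (a i)²)^{3/2}. -/
/-!
Expanding the centred power sums `∑ (P i - c)²` and `∑ (P i - c)³` with `∑ P i = 1` and `n c = 1`
gives `∑ P i² - c` and `∑ P i³ - 3 c ∑ P i² + 2 c²`, which turns the claimed equality into a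
polynomial identity in `c`, `∑ P i²` and `∑ P i³`. For the inequality, drop the square and use that
the `ℓ^p` norms are antitone in `p`, which follows from the superadditivity of `x ↦ x ^ r` on
`[0, ∞)` for `r ≥ 1`.
-/

section CentredPowerSums

variable {ι R : Type*} [CommRing R] (s : Finset ι) (f : ι → R) (c : R)

theorem sum_sub_const_sq :
    ∑ i ∈ s, (f i - c) ^ 2 = ∑ i ∈ s, f i ^ 2 - 2 * c * ∑ i ∈ s, f i + s.card * c ^ 2 := by
  have expand (i : ι) : (f i - c) ^ 2 = f i ^ 2 - 2 * c * f i + c ^ 2 := by ring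
  simp only [expand, Finset.sum_add_distrib, Finset.sum_sub_distrib, Finset.mul_sum,
    Finset.sum_const, nsmul_eq_mul]

theorem sum_sub_const_cube :
    ∑ i ∈ s, (f i - c) ^ 3 = ∑ i ∈ s, f i ^ 3 - 3 * c * ∑ i ∈ s, f i ^ 2
      + 3 * c ^ 2 * ∑ i ∈ s, f i - s.card * c ^ 3 := by
  have expand (i : ι) :
      (f i - c) ^ 3 = f i ^ 3 - 3 * c * f i ^ 2 + 3 * c ^ 2 * f i - c ^ 3 := by ring
  simp only [expand, Finset.sum_add_distrib, Finset.sum_sub_distrib, Finset.mul_sum,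
    Finset.sum_const, nsmul_eq_mul]

variable {s f c}

theorem sum_cube_sub_sum_sq_sq_eq_of_sum_eq_one (hf : ∑ i ∈ s, f i = 1) (hc : s.card * c = 1) :
    ∑ i ∈ s, f i ^ 3 - (∑ i ∈ s, f i ^ 2) ^ 2
      = c * ∑ i ∈ s, (f i - c) ^ 2 + ∑ i ∈ s, (f i - c) ^ 3
        - (∑ i ∈ s, (f i - c) ^ 2) ^ 2 := by
  have hsq : ∑ i ∈ s, (f i - c) ^ 2 = ∑ i ∈ s, f i ^ 2 - c := by
    rw [sum_sub_const_sq, hf]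
    linear_combination c * hc
  have hcube : ∑ i ∈ s, (f i - c) ^ 3
      = ∑ i ∈ s, f i ^ 3 - 3 * c * ∑ i ∈ s, f i ^ 2 + 2 * c ^ 2 := by
    rw [sum_sub_const_cube, hf]
    linear_combination -c ^ 2 * hc
  rw [hsq, hcube]
  ring

end CentredPowerSums

section PowerSumInequalities

variable {ι : Type*} {s : Finset ι}

theorem sum_rpow_le_rpow_sum {f : ι → ℝ} (hf : ∀ i ∈ s, 0 ≤ f i) {r : ℝ} (hr : 1 ≤ r) :
    ∑ i ∈ s, f i ^ r ≤ (∑ i ∈ s, f i) ^ r := by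
  induction s using Finset.cons_induction with
  | empty => simp [Real.zero_rpow (zero_lt_one.trans_le hr).ne']
  | cons j t hj ih =>
    obtain ⟨hfj, hft⟩ := Finset.forall_mem_cons hj _ |>.mp hf
    rw [Finset.sum_cons, Finset.sum_cons]
    calc f j ^ r + ∑ i ∈ t, f i ^ r
        ≤ f j ^ r + (∑ i ∈ t, f i) ^ r := by gcongr; exact ih hft
      _ ≤ (f j + ∑ i ∈ t, f i) ^ r :=
          Real.add_rpow_le_rpow_add hfj (Finset.sum_nonneg hft) hr

theorem sum_abs_rpow_le_rpow_sum_abs_rpow (f : ι → ℝ) {p q : ℝ} (hp : 0 < p) (hpq : p ≤ q) :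
    ∑ i ∈ s, |f i| ^ q ≤ (∑ i ∈ s, |f i| ^ p) ^ (q / p) := by
  have hpow (i : ι) : |f i| ^ q = (|f i| ^ p) ^ (q / p) := by
    rw [← Real.rpow_mul (abs_nonneg _), mul_div_cancel₀ _ hp.ne']
  simp only [hpow]
  exact sum_rpow_le_rpow_sum (fun i _ ↦ by positivity) ((one_le_div hp).mpr hpq)

theorem sum_pow_le_rpow_sum_sq (f : ι → ℝ) {k : ℕ} (hk : 2 ≤ k) :
    ∑ i ∈ s, f i ^ k ≤ (∑ i ∈ s, f i ^ 2) ^ ((k : ℝ) / 2) := by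
  calc ∑ i ∈ s, f i ^ k
      ≤ ∑ i ∈ s, |f i| ^ (k : ℝ) := by
        gcongr with i
        rw [Real.rpow_natCast, ← abs_pow]
        exact le_abs_self _
    _ ≤ (∑ i ∈ s, |f i| ^ (2 : ℝ)) ^ ((k : ℝ) / 2) :=
        sum_abs_rpow_le_rpow_sum_abs_rpow f two_pos (mod_cast hk)
    _ = (∑ i ∈ s, f i ^ 2) ^ ((k : ℝ) / 2) := by simp only [Real.rpow_two, sq_abs]

end PowerSumInequalities

theorem gamma_sub_mu_sq_eq_and_le_general {ι : Type*} {s : Finset ι} {P a : ι → ℝ}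
    (hP : ∑ i ∈ s, P i = 1) (ha : ∀ i ∈ s, a i = P i - 1 / (s.card : ℝ)) :
    (∑ i ∈ s, P i ^ 3 - (∑ i ∈ s, P i ^ 2) ^ 2
        = 1 / (s.card : ℝ) * ∑ i ∈ s, a i ^ 2 + ∑ i ∈ s, a i ^ 3 - (∑ i ∈ s, a i ^ 2) ^ 2) ∧
    (∑ i ∈ s, P i ^ 3 - (∑ i ∈ s, P i ^ 2) ^ 2
        ≤ 1 / (s.card : ℝ) * ∑ i ∈ s, a i ^ 2 + (∑ i ∈ s, a i ^ 2) ^ ((3 : ℝ) / 2)) := by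
  have hs : s.Nonempty := Finset.nonempty_of_sum_ne_zero (hP ▸ one_ne_zero)
  have hcard : (s.card : ℝ) * (1 / s.card) = 1 :=
    mul_one_div_cancel (Nat.cast_ne_zero.mpr hs.card_ne_zero)
  have hpow (k : ℕ) : ∑ i ∈ s, a i ^ k = ∑ i ∈ s, (P i - 1 / (s.card : ℝ)) ^ k :=
    Finset.sum_congr rfl fun i hi ↦ by rw [ha i hi]
  have heq : ∑ i ∈ s, P i ^ 3 - (∑ i ∈ s, P i ^ 2) ^ 2
      = 1 / (s.card : ℝ) * ∑ i ∈ s, a i ^ 2 + ∑ i ∈ s, a i ^ 3 - (∑ i ∈ s, a i ^ 2) ^ 2 := by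
    simpa only [hpow] using sum_cube_sub_sum_sq_sq_eq_of_sum_eq_one hP hcard
  have hcube : ∑ i ∈ s, a i ^ 3 ≤ (∑ i ∈ s, a i ^ 2) ^ ((3 : ℝ) / 2) :=
    mod_cast sum_pow_le_rpow_sum_sq a (k := 3) (by norm_num)
  exact ⟨heq, by linarith [sq_nonneg (∑ i ∈ s, a i ^ 2)]⟩

/-- With `a i = P i − 1/n`, one has
`γ(P) − μ(P)² = (1/n)·∑ aᵢ² + ∑ aᵢ³ − (∑ aᵢ²)²`, and consequently
`γ(P) − μ(P)² ≤ (1/n)·∑ aᵢ² + (∑ aᵢ²)^{3/2}`. -/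
theorem gamma_sub_mu_sq_eq_and_le (n : ℕ) (hn : 1 ≤ n)
    (P : Fin n → ℝ) (hP0 : ∀ i, 0 ≤ P i) (hP1 : (∑ i, P i) = 1)
    (a : Fin n → ℝ) (ha : ∀ i, a i = P i - 1 / (n : ℝ)) :
    ((∑ i, (P i) ^ 3) - (∑ i, (P i) ^ 2) ^ 2
        = (1 / (n : ℝ)) * (∑ i, (a i) ^ 2) + (∑ i, (a i) ^ 3) - (∑ i, (a i) ^ 2) ^ 2) ∧
    ((∑ i, (P i) ^ 3) - (∑ i, (P i) ^ 2) ^ 2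
        ≤ (1 / (n : ℝ)) * (∑ i, (a i) ^ 2) + (∑ i, (a i) ^ 2) ^ ((3 : ℝ) / 2)) := by
  simpa only [Finset.card_fin] using gamma_sub_mu_sq_eq_and_le_general (s := Finset.univ) hP1
    fun i _ ↦ by rw [ha, Finset.card_fin]
end

section
/- Let G = (V, E) be a finite simple graph and P a probability vector on [n]. For the collision count Z on the product sample space, the variance satisfies Var[Z] = |E| · (μ(P) − μ(P)²) + c(G) · (γ(P) − μ(P)²), where μ(P) = ∑_i (P i)², γ(P) = ∑_i (P i)³, and c(G) is the number of ordered 2-paths of G. -/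
open Finset

open Classical in
/-- Probability of the event `A` under the product distribution on `Ω = V → Fin n`,
where the coordinates are independent and each has law the probability vector `P`. -/
noncomputable def pr {V : Type*} [Fintype V] [DecidableEq V] {n : ℕ}
    (P : Fin n → ℝ) (A : (V → Fin n) → Prop) : ℝ :=
  ∑ ω : V → Fin n, if A ω then ∏ v, P (ω v) else 0

/-- Expectation of `f` under the product distribution. -/
noncomputable def ex {V : Type*} [Fintype V] [DecidableEq V] {n : ℕ}
    (P : Fin n → ℝ) (f : (V → Fin n) → ℝ) : ℝ :=
  ∑ ω : V → Fin n, (∏ v, P (ω v)) * f ω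

/-- Variance of `f` under the product distribution. -/
noncomputable def var {V : Type*} [Fintype V] [DecidableEq V] {n : ℕ}
    (P : Fin n → ℝ) (f : (V → Fin n) → ℝ) : ℝ :=
  ex P (fun ω => (f ω - ex P f) ^ 2)

/-- The collision count `Z(ω) = ∑_{{u,v} ∈ E} 1[ω u = ω v]`. -/
noncomputable def collisions {V : Type*} [Fintype V] [DecidableEq V] {n : ℕ}
    (G : SimpleGraph V) [DecidableRel G.Adj] (ω : V → Fin n) : ℝ :=
  ∑ e ∈ G.edgeFinset,
    Sym2.lift ⟨fun u v => if ω u = ω v then (1 : ℝ) else 0,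
      fun u v => by by_cases h : ω u = ω v <;> simp [h, eq_comm]⟩ e

/-- The number of edges `|E|` of the comparison graph. -/
def edgeCount {V : Type*} [Fintype V] [DecidableEq V]
    (G : SimpleGraph V) [DecidableRel G.Adj] : ℕ :=
  G.edgeFinset.card

/-- The number of ordered 2-paths `c(G) = ∑_v d(v)·(d(v) − 1)`. -/
def twoPaths {V : Type*} [Fintype V]
    (G : SimpleGraph V) [DecidableRel G.Adj] : ℕ :=
  ∑ v, G.degree v * (G.degree v - 1)

/-!
Write a symmetric kernel as `k(x, y) = θ + g(x) + g(y) + h(x, y)`, where `θ` is its mean, `g` its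
centred conditional mean, and `h` averages to zero in each argument (Hoeffding's decomposition).
Summing over the edges of `G` gives `|E| θ + ∑_v d(v) g(ω_v) + ∑_{uv ∈ E} h(ω_u, ω_v)`, whose
nonconstant terms are centred and pairwise orthogonal. By Pythagoras the variance is
`∑_v d(v)² E[g²] + |E| E[h²]`, and the formula follows from `E[h²] = E[k²] - θ² - 2 E[g²]` and
`∑_v d(v)² = c(G) + 2 |E|`. For the kernel `1[x = y]`, `θ = μ(P)` and `g(x) = P(x) - μ(P)`.
-/

lemma prod_update_mul {ι α M : Type*} [Fintype ι] [DecidableEq ι] [CommMonoid M] (f : α → M)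
    (i : ι) (x : ι → α) (a : α) :
    (∏ j, f (Function.update x i a j)) * f (x i) = (∏ j, f (x j)) * f a := by
  have hrest : ∏ j ∈ {i}ᶜ, f (Function.update x i a j) = ∏ j ∈ {i}ᶜ, f (x j) :=
    prod_congr rfl fun j hj => by rw [Function.update_of_ne (by simpa using hj)]
  rw [Fintype.prod_eq_mul_prod_compl i, Fintype.prod_eq_mul_prod_compl i (fun j => f (x j)),
    hrest, Function.update_self, mul_comm (f a), mul_comm (f (x i)), mul_right_comm]

section Expectation

variable {V : Type*} [Fintype V] [DecidableEq V] {n : ℕ} {P : Fin n → ℝ}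

lemma ex_add (f g : (V → Fin n) → ℝ) : ex P (f + g) = ex P f + ex P g :=
  dotProduct_add _ f g

lemma ex_sum {ι : Type*} (s : Finset ι) (f : ι → (V → Fin n) → ℝ) :
    ex P (∑ i ∈ s, f i) = ∑ i ∈ s, ex P (f i) :=
  dotProduct_sum _ s f

lemma ex_const (hP1 : ∑ i, P i = 1) (c : ℝ) : ex P (fun _ : V → Fin n => c) = c := by
  have htotal : ∑ ω : V → Fin n, ∏ v, P (ω v) = 1 := by
    rw [← Fintype.prod_sum (fun _ : V => P)]
    simp only [hP1, prod_const_one]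
  rw [ex, ← sum_mul, htotal, one_mul]

lemma var_const_add (hP1 : ∑ i, P i = 1) (c : ℝ) {f : (V → Fin n) → ℝ} (hf : ex P f = 0) :
    var P (fun ω => c + f ω) = ex P (f ^ 2) := by
  have hmean : ex P (fun ω => c + f ω) = c :=
    (ex_add (fun _ => c) f).trans (by rw [ex_const hP1, hf, add_zero])
  simp only [var, hmean, add_sub_cancel_left]
  rfl

lemma ex_sum_sq_of_pairwise {ι : Type*} {s : Finset ι} {f : ι → (V → Fin n) → ℝ}
    (hf : (s : Set ι).Pairwise fun i j => ex P (f i * f j) = 0) :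
    ex P ((∑ i ∈ s, f i) ^ 2) = ∑ i ∈ s, ex P (f i ^ 2) := by
  simp only [sq, sum_mul_sum, ex_sum]
  exact sum_congr rfl fun i hi =>
    sum_eq_single_of_mem i hi fun j hj hji => hf hi hj hji.symm

end Expectation

section Resampling

variable {V : Type*} [DecidableEq V] {n : ℕ} {P : Fin n → ℝ}

/-- The conditional expectation of `f` given all coordinates except the one at `v`, which is
resampled from `P`. -/
noncomputable def condEx (P : Fin n → ℝ) (v : V) (f : (V → Fin n) → ℝ) : (V → Fin n) → ℝ :=
  fun ω => ∑ i, P i * f (Function.update ω v i)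

lemma condEx_mul_of_dependsOn {v : V} (f : (V → Fin n) → ℝ) {g : (V → Fin n) → ℝ}
    (hg : DependsOn g {v}ᶜ) : condEx P v (f * g) = condEx P v f * g := by
  funext ω
  have hgω (i : Fin n) : g (Function.update ω v i) = g ω :=
    hg fun w hw => Function.update_of_ne hw _ _
  simp only [condEx, Pi.mul_apply, hgω, sum_mul, mul_assoc]

variable [Fintype V]

lemma ex_condEx (v : V) (f : (V → Fin n) → ℝ) :
    ex P (condEx P v f) = (∑ i, P i) * ex P f := by
  -- Exchanging the coordinate at `v` with the fresh sample preserves the joint weight.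
  let swap : (V → Fin n) × Fin n → (V → Fin n) × Fin n :=
    fun p => (Function.update p.1 v p.2, p.1 v)
  have hswap : Function.Involutive swap := fun p => by simp [swap]
  calc ex P (condEx P v f)
      = ∑ p : (V → Fin n) × Fin n, (∏ w, P (p.1 w)) * P p.2 * f (swap p).1 := by
        simp only [ex, condEx, swap, Fintype.sum_prod_type, mul_sum, mul_assoc]
    _ = ∑ p : (V → Fin n) × Fin n, (∏ w, P ((swap p).1 w)) * P (swap p).2 * f (swap p).1 :=
        sum_congr rfl fun p _ => by rw [← prod_update_mul P v p.1 p.2]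
    _ = ∑ p : (V → Fin n) × Fin n, (∏ w, P (p.1 w)) * P p.2 * f p.1 :=
        Equiv.sum_comp hswap.toPerm fun p => (∏ w, P (p.1 w)) * P p.2 * f p.1
    _ = (∑ i, P i) * ex P f := by
        rw [mul_comm, ex, sum_mul_sum, Fintype.sum_prod_type]
        exact sum_congr rfl fun ω _ => sum_congr rfl fun i _ => by ring

lemma ex_condEx_of_sum_eq_one (hP1 : ∑ i, P i = 1) (v : V) (f : (V → Fin n) → ℝ) :
    ex P (condEx P v f) = ex P f := by
  rw [ex_condEx, hP1, one_mul]

lemma ex_eq_zero_of_condEx_eq_zero (hP1 : ∑ i, P i = 1) {v : V} {f : (V → Fin n) → ℝ}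
    (hf : condEx P v f = 0) : ex P f = 0 := by
  rw [← ex_condEx_of_sum_eq_one hP1 v, hf]
  exact dotProduct_zero _

lemma ex_mul_eq_zero_of_dependsOn (hP1 : ∑ i, P i = 1) {v : V} {f g : (V → Fin n) → ℝ}
    (hf : condEx P v f = 0) (hg : DependsOn g {v}ᶜ) : ex P (f * g) = 0 :=
  ex_eq_zero_of_condEx_eq_zero hP1 (by rw [condEx_mul_of_dependsOn f hg, hf, zero_mul])

end Resampling

section Kernel

variable {α : Type*} [Fintype α] {P : α → ℝ}

/-- The mean of the symmetric kernel `k` on a pair of independent points with law `P`; symmetric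
kernels are encoded as functions on unordered pairs. -/
noncomputable def kernelMean (P : α → ℝ) (k : Sym2 α → ℝ) : ℝ :=
  ∑ i, P i * ∑ j, P j * k s(i, j)

lemma kernelMean_sub (k l : Sym2 α → ℝ) :
    kernelMean P (k - l) = kernelMean P k - kernelMean P l := by
  simp only [kernelMean, Pi.sub_apply, mul_sub, sum_sub_distrib]

lemma kernelMean_smul (c : ℝ) (k : Sym2 α → ℝ) :
    kernelMean P (c • k) = c * kernelMean P k := by
  simp only [kernelMean, Pi.smul_apply, smul_eq_mul, mul_sum, mul_left_comm c]

lemma kernelMean_mul_map_add (k : Sym2 α → ℝ) (φ : α → ℝ) :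
    kernelMean P (fun p => k p * (p.map φ).add)
      = 2 * ∑ i, P i * (φ i * ∑ j, P j * k s(i, j)) := by
  have hswap : ∑ i, P i * ∑ j, P j * (k s(i, j) * φ j)
      = ∑ i, P i * ∑ j, P j * (k s(i, j) * φ i) := by
    simp only [mul_sum]
    rw [sum_comm]
    exact sum_congr rfl fun j _ => sum_congr rfl fun i _ => by rw [Sym2.eq_swap, mul_left_comm]
  simp only [kernelMean, Sym2.map_mk, Sym2.add_mk, mul_add, sum_add_distrib, hswap, ← two_mul]
  simp only [← mul_assoc, ← sum_mul]
  simp only [mul_assoc, mul_comm (φ _)]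

/-- The linear component of the Hoeffding decomposition of `k`: the centred mean of `k` given one
of its arguments. -/
noncomputable def linearPart (P : α → ℝ) (k : Sym2 α → ℝ) (i : α) : ℝ :=
  ∑ j, P j * k s(i, j) - kernelMean P k

/-- The degenerate component of the Hoeffding decomposition of `k`: what remains after removing
the mean and the linear component of either argument. -/
noncomputable def degeneratePart (P : α → ℝ) (k : Sym2 α → ℝ) (p : Sym2 α) : ℝ :=
  k p - kernelMean P k - (p.map (linearPart P k)).add

lemma sum_mul_linearPart (hP1 : ∑ i, P i = 1) (k : Sym2 α → ℝ) :
    ∑ i, P i * linearPart P k i = 0 := by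
  simp only [linearPart, mul_sub, sum_sub_distrib, ← sum_mul, hP1, one_mul]
  exact sub_self _

lemma sum_mul_linearPart_sq (hP1 : ∑ i, P i = 1) (k : Sym2 α → ℝ) :
    ∑ i, P i * linearPart P k i ^ 2
      = ∑ i, P i * (∑ j, P j * k s(i, j)) ^ 2 - kernelMean P k ^ 2 := by
  have hmean : ∑ i, P i * ∑ j, P j * k s(i, j) = kernelMean P k := rfl
  have hexpand (i : α) : P i * linearPart P k i ^ 2
      = P i * (∑ j, P j * k s(i, j)) ^ 2
        - 2 * kernelMean P k * (P i * ∑ j, P j * k s(i, j)) + P i * kernelMean P k ^ 2 := by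
    rw [linearPart]
    ring
  simp only [hexpand, sum_add_distrib, sum_sub_distrib, ← mul_sum, ← sum_mul, hP1, hmean]
  ring

lemma sum_mul_degeneratePart (hP1 : ∑ i, P i = 1) (k : Sym2 α → ℝ) (i : α) :
    ∑ j, P j * degeneratePart P k s(i, j) = 0 := by
  simp only [degeneratePart, Sym2.map_mk, Sym2.add_mk, mul_sub, mul_add, sum_sub_distrib,
    sum_add_distrib, ← sum_mul, hP1, sum_mul_linearPart hP1]
  simp only [linearPart]
  ring

lemma kernelMean_degeneratePart_sq (hP1 : ∑ i, P i = 1) (k : Sym2 α → ℝ) :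
    kernelMean P (degeneratePart P k ^ 2)
      = kernelMean P (k ^ 2) - kernelMean P k ^ 2 - 2 * ∑ i, P i * linearPart P k i ^ 2 := by
  set g := linearPart P k with hg
  set h := degeneratePart P k with hh
  -- Expanding one factor at a time pairs `h` only with functions of one argument.
  have hexpand : h ^ 2 = k ^ 2 - kernelMean P k • k - (fun p => k p * (p.map g).add)
      - kernelMean P k • h - (fun p => h p * (p.map g).add) := by
    funext p
    simp only [hh, hg, degeneratePart, Pi.sub_apply, Pi.pow_apply, Pi.smul_apply, smul_eq_mul]
    ring
  have hdegenerate (i : α) : ∑ j, P j * h s(i, j) = 0 := sum_mul_degeneratePart hP1 k i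
  have hmean : kernelMean P h = 0 := by
    simp only [kernelMean, hdegenerate, mul_zero, sum_const_zero]
  have hcross : ∑ i, P i * (g i * ∑ j, P j * k s(i, j)) = ∑ i, P i * g i ^ 2 := by
    have hcond (i : α) : ∑ j, P j * k s(i, j) = g i + kernelMean P k :=
      (sub_add_cancel _ _).symm
    simp only [hcond, mul_add, sum_add_distrib, ← mul_assoc, ← sum_mul, hg,
      sum_mul_linearPart hP1, zero_mul, add_zero]
    simp only [mul_assoc, sq]
  simp only [hexpand, kernelMean_sub, kernelMean_smul, kernelMean_mul_map_add, hdegenerate, hmean,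
    hcross, mul_zero, sum_const_zero]
  ring

end Kernel

section CollisionKernel

variable {α : Type*} [DecidableEq α]

/-- The indicator that the two points of an unordered pair agree, as a symmetric kernel. -/
noncomputable def collisionKernel (p : Sym2 α) : ℝ :=
  if p.IsDiag then 1 else 0

lemma collisionKernel_sq : (collisionKernel : Sym2 α → ℝ) ^ 2 = collisionKernel := by
  funext p
  simp only [Pi.pow_apply, collisionKernel, ite_pow, one_pow, zero_pow two_ne_zero]

variable [Fintype α]

lemma sum_mul_collisionKernel (P : α → ℝ) (i : α) :
    ∑ j, P j * collisionKernel s(i, j) = P i := by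
  simp only [collisionKernel, Sym2.mk_isDiag_iff, mul_ite, mul_one, mul_zero, sum_ite_eq, mem_univ,
    if_true]

lemma kernelMean_collisionKernel (P : α → ℝ) :
    kernelMean P collisionKernel = ∑ i, P i ^ 2 := by
  simp only [kernelMean, sum_mul_collisionKernel, sq]

end CollisionKernel

section SiteAndPair

variable {V : Type*} {n : ℕ} {P : Fin n → ℝ}

lemma dependsOn_comp_eval {v w : V} (hvw : v ≠ w) (φ : Fin n → ℝ) :
    DependsOn (fun ω : V → Fin n => φ (ω v)) {w}ᶜ :=
  fun _ _ hω => congrArg φ (hω v hvw)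

lemma dependsOn_comp_map {e : Sym2 V} {v : V} (hv : v ∉ e) (k : Sym2 (Fin n) → ℝ) :
    DependsOn (fun ω : V → Fin n => k (e.map ω)) {v}ᶜ :=
  fun _ _ hω => congrArg k (Sym2.map_congr fun w hw => hω w (ne_of_mem_of_not_mem hw hv))

variable [DecidableEq V]

lemma condEx_comp_eval (v : V) (φ : Fin n → ℝ) :
    condEx P v (fun ω => φ (ω v)) = fun _ => ∑ i, P i * φ i := by
  funext ω
  simp only [condEx, Function.update_self]

lemma condEx_comp_map {a b : V} (hab : a ≠ b) (k : Sym2 (Fin n) → ℝ) :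
    condEx P b (fun ω => k (s(a, b).map ω)) = fun ω => ∑ j, P j * k s(ω a, j) := by
  funext ω
  simp only [condEx, Sym2.map_mk, Function.update_self, Function.update_of_ne hab]

lemma condEx_comp_map_eq_zero {h : Sym2 (Fin n) → ℝ} (hh : ∀ i, ∑ j, P j * h s(i, j) = 0)
    {e : Sym2 V} (he : ¬ e.IsDiag) {v : V} (hv : v ∈ e) :
    condEx P v (fun ω => h (e.map ω)) = 0 := by
  obtain ⟨w, rfl⟩ := hv
  rw [Sym2.eq_swap, condEx_comp_map (Ne.symm he)]
  exact funext fun ω => hh (ω w)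

variable [Fintype V]

lemma ex_comp_eval (hP1 : ∑ i, P i = 1) (v : V) (φ : Fin n → ℝ) :
    ex P (fun ω => φ (ω v)) = ∑ i, P i * φ i := by
  rw [← ex_condEx_of_sum_eq_one hP1 v, condEx_comp_eval, ex_const hP1]

lemma ex_comp_map (hP1 : ∑ i, P i = 1) {e : Sym2 V} (he : ¬ e.IsDiag) (k : Sym2 (Fin n) → ℝ) :
    ex P (fun ω => k (e.map ω)) = kernelMean P k := by
  induction e with | _ a b
  rw [← ex_condEx_of_sum_eq_one hP1 b, condEx_comp_map he]
  exact ex_comp_eval hP1 a fun i => ∑ j, P j * k s(i, j)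

lemma ex_eval_mul_eval_eq_zero (hP1 : ∑ i, P i = 1) {φ : Fin n → ℝ} (hφ : ∑ i, P i * φ i = 0)
    (ψ : Fin n → ℝ) {v w : V} (hvw : v ≠ w) :
    ex P ((fun ω => φ (ω v)) * fun ω => ψ (ω w)) = 0 :=
  ex_mul_eq_zero_of_dependsOn hP1 ((condEx_comp_eval v φ).trans (by rw [hφ]; rfl))
    (dependsOn_comp_eval hvw.symm ψ)

lemma ex_map_mul_eval_eq_zero (hP1 : ∑ i, P i = 1) {h : Sym2 (Fin n) → ℝ}
    (hh : ∀ i, ∑ j, P j * h s(i, j) = 0) (φ : Fin n → ℝ) {e : Sym2 V} (he : ¬ e.IsDiag) (v : V) :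
    ex P ((fun ω => h (e.map ω)) * fun ω => φ (ω v)) = 0 := by
  obtain ⟨w, hwe, hwv⟩ : ∃ w ∈ e, w ≠ v := by
    induction e with | _ a b
    by_contra! hall
    exact he ((hall a (Sym2.mem_mk_left a b)).trans (hall b (Sym2.mem_mk_right a b)).symm)
  exact ex_mul_eq_zero_of_dependsOn hP1 (condEx_comp_map_eq_zero hh he hwe)
    (dependsOn_comp_eval hwv.symm φ)

lemma ex_map_mul_map_eq_zero (hP1 : ∑ i, P i = 1) {h : Sym2 (Fin n) → ℝ}
    (hh : ∀ i, ∑ j, P j * h s(i, j) = 0) (k : Sym2 (Fin n) → ℝ) {e f : Sym2 V}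
    (he : ¬ e.IsDiag) (hef : e ≠ f) :
    ex P ((fun ω => h (e.map ω)) * fun ω => k (f.map ω)) = 0 := by
  obtain ⟨v, hve, hvf⟩ : ∃ v ∈ e, v ∉ f := by
    induction e with | _ a b
    by_contra! hall
    exact hef ((Sym2.mem_and_mem_iff he).1
      ⟨hall a (Sym2.mem_mk_left a b), hall b (Sym2.mem_mk_right a b)⟩).symm
  exact ex_mul_eq_zero_of_dependsOn hP1 (condEx_comp_map_eq_zero hh he hve)
    (dependsOn_comp_map hvf k)

lemma ex_sum_eval_add_sum_map_eq_zero (hP1 : ∑ i, P i = 1) {φ : V → Fin n → ℝ}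
    (hφ : ∀ v, ∑ i, P i * φ v i = 0) {h : Sym2 V → Sym2 (Fin n) → ℝ}
    (hh : ∀ e i, ∑ j, P j * h e s(i, j) = 0) {E : Finset (Sym2 V)} (hE : ∀ e ∈ E, ¬ e.IsDiag) :
    ex P (∑ v, (fun ω => φ v (ω v)) + ∑ e ∈ E, fun ω => h e (e.map ω)) = 0 := by
  have hsites (v : V) : ex P (fun ω => φ v (ω v)) = 0 :=
    (ex_comp_eval hP1 v (φ v)).trans (hφ v)
  have hpairs (e : Sym2 V) (he : e ∈ E) : ex P (fun ω => h e (e.map ω)) = 0 := by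
    simp only [ex_comp_map hP1 (hE e he), kernelMean, hh, mul_zero, sum_const_zero]
  rw [ex_add, ex_sum, ex_sum, sum_congr rfl hpairs]
  simp only [hsites, sum_const_zero, add_zero]

/-- Of two distinct terms, one involves a coordinate that the other does not, and averaging over
that coordinate kills their product. -/
lemma ex_sq_sum_eval_add_sum_map (hP1 : ∑ i, P i = 1) {φ : V → Fin n → ℝ}
    (hφ : ∀ v, ∑ i, P i * φ v i = 0) {h : Sym2 V → Sym2 (Fin n) → ℝ}
    (hh : ∀ e i, ∑ j, P j * h e s(i, j) = 0) {E : Finset (Sym2 V)} (hE : ∀ e ∈ E, ¬ e.IsDiag) :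
    ex P ((∑ v, (fun ω => φ v (ω v)) + ∑ e ∈ E, fun ω => h e (e.map ω)) ^ 2)
      = ∑ v, ∑ i, P i * φ v i ^ 2 + ∑ e ∈ E, kernelMean P (h e ^ 2) := by
  let summand : V ⊕ Sym2 V → (V → Fin n) → ℝ :=
    Sum.elim (fun v ω => φ v (ω v)) fun e ω => h e (e.map ω)
  have horthogonal : ((univ.disjSum E : Finset (V ⊕ Sym2 V)) : Set (V ⊕ Sym2 V)).Pairwise
      fun x y => ex P (summand x * summand y) = 0 := by
    rintro (v | e) hx (w | f) hy hxy
    · exact ex_eval_mul_eval_eq_zero hP1 (hφ v) (φ w) (hxy <| congrArg Sum.inl ·)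
    · rw [mul_comm]
      exact ex_map_mul_eval_eq_zero hP1 (hh f) (φ v) (hE f (inr_mem_disjSum.1 hy)) v
    · exact ex_map_mul_eval_eq_zero hP1 (hh e) (φ w) (hE e (inr_mem_disjSum.1 hx)) w
    · exact ex_map_mul_map_eq_zero hP1 (hh e) (h f) (hE e (inr_mem_disjSum.1 hx))
        (hxy <| congrArg Sum.inr ·)
  have hpythagoras := ex_sum_sq_of_pairwise horthogonal
  simp only [sum_disjSum] at hpythagoras
  refine hpythagoras.trans (congrArg₂ _ ?_ ?_)
  · exact sum_congr rfl fun v _ => ex_comp_eval hP1 v fun i => φ v i ^ 2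
  · exact sum_congr rfl fun e he => ex_comp_map hP1 (hE e he) (h e ^ 2)

end SiteAndPair

section Graph

variable {V : Type*} [Fintype V] (G : SimpleGraph V) [DecidableRel G.Adj]

lemma sum_edgeFinset_map_add {M : Type*} [AddCommMonoid M] (φ : V → M) :
    ∑ e ∈ G.edgeFinset, (e.map φ).add = ∑ v, G.degree v • φ v := by
  classical
  have hadd (e : Sym2 V) (he : e ∈ G.edgeFinset) : (e.map φ).add = ∑ v ∈ e.toFinset, φ v := by
    have hdiag := G.not_isDiag_of_mem_edgeFinset he
    induction e with | _ a b
    rw [Sym2.toFinset_mk_eq, sum_pair hdiag, Sym2.map_mk, Sym2.add_mk]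
  rw [sum_congr rfl hadd, sum_comm' (t' := univ) (s' := fun v => G.incidenceFinset v) fun e v => by
    simp [G.incidenceFinset_eq_filter]]
  simp only [sum_const, G.card_incidenceFinset_eq_degree]

/-- The sum over the edges `{u, v}` of `G` of a symmetric kernel at the labels of `u` and `v`. -/
noncomputable def edgeSum {n : ℕ} (k : Sym2 (Fin n) → ℝ) (ω : V → Fin n) : ℝ :=
  ∑ e ∈ G.edgeFinset, k (e.map ω)

variable [DecidableEq V]

lemma twoPaths_add_two_mul_edgeCount :
    twoPaths G + 2 * edgeCount G = ∑ v, G.degree v ^ 2 := by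
  rw [edgeCount, ← G.sum_degrees_eq_twice_card_edges, twoPaths, ← sum_add_distrib]
  refine sum_congr rfl fun v _ => ?_
  rcases G.degree v with _ | d
  · rfl
  · rw [Nat.add_sub_cancel]
    ring

variable {n : ℕ}

lemma edgeSum_eq_hoeffding (P : Fin n → ℝ) (k : Sym2 (Fin n) → ℝ) :
    edgeSum G k = fun ω => edgeCount G * kernelMean P k
      + (∑ v, (fun ω : V → Fin n => G.degree v * linearPart P k (ω v))
        + ∑ e ∈ G.edgeFinset, fun ω : V → Fin n => degeneratePart P k (e.map ω)) ω := by
  funext ω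
  have hlinear : ∑ e ∈ G.edgeFinset, ((e.map ω).map (linearPart P k)).add
      = ∑ v, G.degree v * linearPart P k (ω v) := by
    simp only [Sym2.map_map, sum_edgeFinset_map_add, nsmul_eq_mul, Function.comp_apply]
  simp only [Pi.add_apply, Finset.sum_apply, degeneratePart, sum_sub_distrib, hlinear, sum_const,
    nsmul_eq_mul, edgeSum, edgeCount]
  ring

theorem var_edgeSum {P : Fin n → ℝ} (hP1 : ∑ i, P i = 1) (k : Sym2 (Fin n) → ℝ) :
    var P (edgeSum G k)
      = edgeCount G * (kernelMean P (k ^ 2) - kernelMean P k ^ 2)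
        + twoPaths G * (∑ i, P i * (∑ j, P j * k s(i, j)) ^ 2 - kernelMean P k ^ 2) := by
  have hedges : ∀ e ∈ G.edgeFinset, ¬ e.IsDiag := fun _ => G.not_isDiag_of_mem_edgeFinset
  have hlinear (v : V) : ∑ i, P i * (G.degree v * linearPart P k i) = 0 := by
    simp only [mul_left_comm (P _), ← mul_sum, sum_mul_linearPart hP1, mul_zero]
  have hdegenerate (_ : Sym2 V) := sum_mul_degeneratePart hP1 k
  have hdegree : ∑ v, (G.degree v : ℝ) ^ 2 = twoPaths G + 2 * edgeCount G := by
    exact_mod_cast (twoPaths_add_two_mul_edgeCount G).symm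
  rw [edgeSum_eq_hoeffding G P,
    var_const_add hP1 _ (ex_sum_eval_add_sum_map_eq_zero hP1 hlinear hdegenerate hedges),
    ex_sq_sum_eval_add_sum_map hP1 hlinear hdegenerate hedges]
  simp only [mul_pow, mul_left_comm (P _), ← mul_sum, ← sum_mul, hdegree, sum_const, nsmul_eq_mul,
    kernelMean_degeneratePart_sq hP1, sum_mul_linearPart_sq hP1, edgeCount]
  ring

lemma collisions_eq_edgeSum :
    collisions G = edgeSum G (collisionKernel : Sym2 (Fin n) → ℝ) := by
  funext ω
  refine sum_congr rfl fun e _ => ?_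
  induction e with | _ a b
  simp only [collisionKernel, Sym2.lift_mk, Sym2.map_mk, Sym2.mk_isDiag_iff]

end Graph

theorem variance_collisions_general {V : Type*} [Fintype V] [DecidableEq V] {n : ℕ}
    (G : SimpleGraph V) [DecidableRel G.Adj] (P : Fin n → ℝ) (hP1 : ∑ i, P i = 1) :
    var P (fun ω : V → Fin n => collisions G ω)
      = (edgeCount G : ℝ) * ((∑ i, P i ^ 2) - (∑ i, P i ^ 2) ^ 2)
        + (twoPaths G : ℝ) * ((∑ i, P i ^ 3) - (∑ i, P i ^ 2) ^ 2) := by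
  rw [collisions_eq_edgeSum, var_edgeSum G hP1, collisionKernel_sq, kernelMean_collisionKernel]
  simp only [sum_mul_collisionKernel, ← pow_succ']

/-- The variance of the collision count `Z` equals
`|E|·(μ(P) − μ(P)²) + c(G)·(γ(P) − μ(P)²)`. -/
theorem variance_collisions {V : Type*} [Fintype V] [DecidableEq V] (n : ℕ)
    (G : SimpleGraph V) [DecidableRel G.Adj]
    (P : Fin n → ℝ) (hP0 : ∀ i, 0 ≤ P i) (hP1 : (∑ i, P i) = 1) :
    var P (fun ω : V → Fin n => collisions G ω)
      = (edgeCount G : ℝ) * ((∑ i, (P i) ^ 2) - (∑ i, (P i) ^ 2) ^ 2)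
        + (twoPaths G : ℝ) * ((∑ i, (P i) ^ 3) - (∑ i, (P i) ^ 2) ^ 2) := by
  exact variance_collisions_general G P hP1
end
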